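/- arXiv:2308.05066 — 2 statements merged into one kernel-verified Lean document; each statement's English description precedes it below -/
import Mathlib

section
/- Let B be an integral domain graded by an abelian group G and let H ∈ 𝕋(B). Then 𝔾(B^{(H)}) = H ∩ 𝔾(B). If moreover B is noetherian and normal, then 𝔾̄(B^{(H)}) = H ∩ 𝔾̄(B). -/
noncomputable section

/-- A derivation is locally nilpotent. -/
def IsLND {R : Type*} [CommRing R] (D : Derivation ℤ R R) : Prop :=
  ∀ b : R, ∃ n : ℕ, 0 < n ∧ (⇑D)^[n] b = 0

/-- Kernel of a derivation, as a subring. -/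
def kerDer {R : Type*} [CommRing R] (D : Derivation ℤ R R) : Subring R where
  carrier := {x | D x = 0}
  one_mem' := by simp
  mul_mem' := by
    intro a b ha hb
    simp only [Set.mem_setOf_eq] at *
    rw [Derivation.leibniz, ha, hb]
    simp
  add_mem' := by
    intro a b ha hb
    simp only [Set.mem_setOf_eq] at *
    rw [map_add, ha, hb, add_zero]
  zero_mem' := by simp
  neg_mem' := by
    intro a ha
    simp only [Set.mem_setOf_eq] at *
    rw [map_neg, ha, neg_zero]

section Graded

variable {G : Type*} [AddCommGroup G] {B : Type*} [CommRing B]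

/-- The Veronese subring `B^{(H)} = ⊕_{i ∈ H} B_i` of a `G`-graded ring,
realized as the subring generated by the homogeneous elements whose degree lies in `H`. -/
def verSub (𝒜 : G → AddSubgroup B) (H : AddSubgroup G) : Subring B :=
  Subring.closure (⋃ i ∈ (H : Set G), (𝒜 i : Set B))

/-- 𝔾(B): the subgroup of G generated by the degrees of nonzero homogeneous elements. -/
def Gsub (𝒜 : G → AddSubgroup B) : AddSubgroup G :=
  AddSubgroup.closure { i : G | 𝒜 i ≠ ⊥ }

/-- `H ∈ 𝕋(B)`: the quotient `𝔾(B)/(H ∩ 𝔾(B))` is torsion. -/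
def Tmem (𝒜 : G → AddSubgroup B) (H : AddSubgroup G) : Prop :=
  ∀ g ∈ Gsub 𝒜, ∃ n : ℕ, 0 < n ∧ n • g ∈ H

/-- A homogeneous derivation of `B`. -/
def IsHomogDer (𝒜 : G → AddSubgroup B) (D : Derivation ℤ B B) : Prop :=
  ∃ d : G, ∀ (i : G) (x : B), x ∈ 𝒜 i → D x ∈ 𝒜 (i + d)

/-- A homogeneous derivation of a graded subring `S` of `B`. -/
def IsHomogDerOn (𝒜 : G → AddSubgroup B) (S : Subring B) (D : Derivation ℤ S S) : Prop :=
  ∃ d : G, ∀ (i : G) (x : S), (x : B) ∈ 𝒜 i → ((D x : S) : B) ∈ 𝒜 (i + d)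

/-- 𝕄̄(B,p): the subgroup of G generated by the degrees i with B_i ⊄ p. -/
def Mbar (𝒜 : G → AddSubgroup B) (p : Ideal B) : AddSubgroup G :=
  AddSubgroup.closure { i : G | ¬ (𝒜 i : Set B) ⊆ (p : Set B) }

/-- A prime ideal of height 1. -/
def heightOne {R : Type*} [CommRing R] (p : Ideal R) : Prop :=
  p.IsPrime ∧ (∃ q : Ideal R, q.IsPrime ∧ q < p) ∧
    ∀ q r : Ideal R, q.IsPrime → r.IsPrime → q < r → r < p → False

open Classical in
/-- 𝔾̄(B). -/
def Gbar (𝒜 : G → AddSubgroup B) : AddSubgroup G :=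
  if ∃ p : Ideal B, heightOne p then ⨅ p : {p : Ideal B // heightOne p}, Mbar 𝒜 p.1
  else Gsub 𝒜

end Graded

section Sub

variable {G : Type*} [AddCommGroup G] {B : Type*} [CommRing B]

/-- 𝔾 of a graded subring S of B. -/
def GsubOf (𝒜 : G → AddSubgroup B) (S : Subring B) : AddSubgroup G :=
  AddSubgroup.closure { i : G | ∃ x : B, x ∈ S ∧ x ≠ 0 ∧ x ∈ 𝒜 i }

/-- 𝕄̄(S,p) for a graded subring S of B and an ideal p of S. -/
def MbarSub (𝒜 : G → AddSubgroup B) (S : Subring B) (p : Ideal S) : AddSubgroup G :=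
  AddSubgroup.closure { i : G | ∃ x : S, (x : B) ∈ 𝒜 i ∧ x ∉ p }

open Classical in
/-- 𝔾̄ of a graded subring S of B. -/
noncomputable def GbarSub (𝒜 : G → AddSubgroup B) (S : Subring B) : AddSubgroup G :=
  if ∃ p : Ideal S, heightOne p then
    ⨅ p : {p : Ideal S // heightOne p}, MbarSub 𝒜 S p.1
  else GsubOf 𝒜 S

end Sub

/-!
Merging the components of `B` whose degrees agree modulo `H` gives a grading by `G ⧸ H` whose
component of degree zero is `A = B^{(H)}`. As `H ∈ 𝕋(B)`, each homogeneous element of the merged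
grading has a positive power in `A`, so `B` is integral over `A`. Going-down holds as well: let
`q < P ∩ A` and `a * b ∈ q B` with `a ∈ A` and `b ∉ P`. Some component `c` of `b` lies outside
`P`, and `a * c ∈ q B` because `q B` is homogeneous. If `c ^ n ∈ A`, then `a ^ n * c ^ n` is in
`q B ∩ A = q` and `c ^ n ∉ q`, hence `a ∈ q`. Therefore `P ↦ P ∩ A` maps `Spec¹(B)` onto `Spec¹(A)`.

For a prime `P` the set `𝕄(B, P)` is a submonoid of `G`, torsion modulo `H`, so that
`𝕄̄(A, P ∩ A) = H ∩ 𝕄̄(B, P)`: if `a - b ∈ H` with `a, b ∈ 𝕄(B, P)` and `n • b ∈ H`, then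
`a - b = (a + (n - 1) • b) - n • b` is a difference of elements of `H ∩ 𝕄(B, P)`. The case `P = 0`
is the statement on `𝔾`, and intersecting over `Spec¹(B)` gives the one on `𝔾̄`.
-/

section SubmonoidClosure

open scoped Pointwise

variable {G : Type*} [AddCommGroup G]

lemma exists_sub_eq_of_mem_closure {M : AddSubmonoid G} {g : G}
    (hg : g ∈ AddSubgroup.closure (M : Set G)) : ∃ a ∈ M, ∃ b ∈ M, a - b = g := by
  rw [← AddSubgroup.mem_toAddSubmonoid, AddSubgroup.closure_toAddSubmonoid,
    AddSubmonoid.closure_union, AddSubmonoid.closure_neg, AddSubmonoid.closure_eq] at hg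
  obtain ⟨a, ha, b, hb, rfl⟩ := AddSubmonoid.mem_sup.1 hg
  exact ⟨a, ha, -b, hb, sub_neg_eq_add a b⟩

lemma closure_inter_addSubmonoid_eq_inf_closure (H : AddSubgroup G) (M : AddSubmonoid G)
    (hM : ∀ b ∈ M, ∃ n : ℕ, 0 < n ∧ n • b ∈ H) :
    AddSubgroup.closure ((H : Set G) ∩ M) = H ⊓ AddSubgroup.closure (M : Set G) := by
  refine le_antisymm ?_ ?_
  · rw [AddSubgroup.closure_le]
    exact fun i hi => ⟨hi.1, AddSubgroup.subset_closure hi.2⟩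
  · rintro g ⟨hgH, hg⟩
    obtain ⟨a, ha, b, hb, rfl⟩ := exists_sub_eq_of_mem_closure hg
    obtain ⟨n, hn, hnb⟩ := hM b hb
    obtain ⟨m, rfl⟩ := Nat.exists_eq_succ_of_ne_zero hn.ne'
    have key : a + m • b = a - b + (m + 1) • b := by rw [succ_nsmul]; abel
    have h₁ : a + m • b ∈ (H : Set G) ∩ M :=
      ⟨key ▸ H.add_mem hgH hnb, M.add_mem ha (M.nsmul_mem hb m)⟩
    have h₂ : (m + 1) • b ∈ (H : Set G) ∩ M := ⟨hnb, M.nsmul_mem hb _⟩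
    rw [eq_sub_of_add_eq key.symm]
    exact sub_mem (AddSubgroup.subset_closure h₁) (AddSubgroup.subset_closure h₂)

end SubmonoidClosure

section HeightOne

variable {R S : Type*} [CommRing R] [CommRing S] [Algebra R S] [Algebra.IsIntegral R S]

lemma heightOne.under [Algebra.HasGoingDown R S] {P : Ideal S} (hP : heightOne P) :
    heightOne (P.under R) := by
  obtain ⟨hPprime, ⟨Q, hQ, hQP⟩, hchain⟩ := hP
  refine ⟨inferInstance, ⟨Q.under R, inferInstance, Ideal.IsIntegral.comap_lt_comap hQP⟩, ?_⟩
  intro q r hq hr hqr hrP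
  obtain ⟨P₂, hP₂P, hP₂, _⟩ := Ideal.exists_ideal_lt_liesOver_of_lt (q := P.under R) P hrP
  obtain ⟨P₁, hP₁P₂, hP₁, -⟩ := Ideal.exists_ideal_lt_liesOver_of_lt P₂ hqr
  exact hchain P₁ P₂ hP₁ hP₂ hP₁P₂ hP₂P

lemma heightOne.exists_under_eq [FaithfulSMul R S] {p : Ideal R} (hp : heightOne p) :
    ∃ P : Ideal S, heightOne P ∧ P.under R = p := by
  obtain ⟨hp, ⟨q, hq, hqp⟩, hchain⟩ := hp
  obtain ⟨⟨Q, hQ, hQq⟩⟩ := Ideal.nonempty_primesOver (S := S) q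
  obtain ⟨P, hQP, hP, rfl⟩ :=
    Ideal.exists_ideal_over_prime_of_isIntegral_of_isPrime p Q (hQq.over.symm.trans_le hqp.le)
  have hlt : Q < P := lt_of_le_of_ne hQP fun h => hqp.ne (h ▸ hQq.over)
  refine ⟨P, ⟨hP, ⟨Q, hQ, hlt⟩, fun P₁ P₂ hP₁ hP₂ h₁ h₂ => ?_⟩, rfl⟩
  exact hchain (P₁.under R) (P₂.under R) inferInstance inferInstance
    (Ideal.IsIntegral.comap_lt_comap h₁) (Ideal.IsIntegral.comap_lt_comap h₂)

end HeightOne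

section GoingDown

variable {R S : Type*} [CommRing R] [CommRing S] [Algebra R S]

lemma hasGoingDown_of_forall_mul_mem_map
    (h : ∀ (q : Ideal R) (P : Ideal S) [q.IsPrime] [P.IsPrime], q < P.under R →
      ∀ (a : R) (b : S), algebraMap R S a * b ∈ q.map (algebraMap R S) → b ∉ P → a ∈ q) :
    Algebra.HasGoingDown R S where
  exists_ideal_le_liesOver_of_lt {q} _ P _ hqP := by
    obtain ⟨Q, hQ, hqQ, hdisj⟩ := Ideal.exists_le_prime_disjoint (q.map (algebraMap R S))
      (Algebra.algebraMapSubmonoid S q.primeCompl ⊔ P.primeCompl) <| by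
        rw [Set.disjoint_left]
        intro x hx hmem
        obtain ⟨_, ⟨a, ha, rfl⟩, b, hb, rfl⟩ := Submonoid.mem_sup.1 hmem
        exact ha (h q P hqP a b hx hb)
    have notMem {x : S}
        (hx : x ∈ Algebra.algebraMapSubmonoid S q.primeCompl ⊔ P.primeCompl) : x ∉ Q :=
      Set.disjoint_right.1 hdisj hx
    refine ⟨Q, fun x hxQ => ?_, hQ, ⟨le_antisymm (Ideal.map_le_iff_le_comap.1 hqQ) ?_⟩⟩
    · by_contra hxP
      exact notMem (Submonoid.mem_sup_right hxP) hxQ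
    · intro a haQ
      by_contra haq
      exact notMem (Submonoid.mem_sup_left ⟨a, haq, rfl⟩) haQ

end GoingDown

section TorsionGrading

variable {M : Type*} [AddMonoid M] {B : Type*} [CommRing B]
  (𝒜 : M → AddSubgroup B)

lemma exists_pow_mem_zero_of_isOfFinAddOrder [SetLike.GradedMonoid 𝒜]
    (hM : ∀ i, 𝒜 i ≠ ⊥ → IsOfFinAddOrder i) {i : M} {x : B} (hx : x ∈ 𝒜 i) :
    ∃ n, 0 < n ∧ x ^ n ∈ 𝒜 0 := by
  by_cases hi : 𝒜 i = ⊥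
  · rw [hi, AddSubgroup.mem_bot] at hx
    exact ⟨1, one_pos, by simp [hx]⟩
  · obtain ⟨n, hn, hni⟩ := (hM i hi).exists_nsmul_eq_zero
    exact ⟨n, hn, hni ▸ SetLike.pow_mem_graded n hx⟩

variable [DecidableEq M] [GradedRing 𝒜]

lemma isIntegral_zero_of_isOfFinAddOrder (hM : ∀ i, 𝒜 i ≠ ⊥ → IsOfFinAddOrder i) :
    Algebra.IsIntegral (SetLike.GradeZero.subring 𝒜) B where
  isIntegral b := by
    classical
    rw [← DirectSum.sum_support_decompose 𝒜 b]
    refine IsIntegral.sum _ fun i _ => ?_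
    obtain ⟨n, hn, hmem⟩ :=
      exists_pow_mem_zero_of_isOfFinAddOrder 𝒜 hM (DirectSum.decompose 𝒜 b i).2
    exact IsIntegral.of_pow hn
      (isIntegral_algebraMap (R := SetLike.GradeZero.subring 𝒜) (x := ⟨_, hmem⟩))

lemma isHomogeneous_map_algebraMap_zero (q : Ideal (SetLike.GradeZero.subring 𝒜)) :
    (q.map (algebraMap (SetLike.GradeZero.subring 𝒜) B)).IsHomogeneous 𝒜 := by
  refine Ideal.homogeneous_span 𝒜 _ ?_
  rintro _ ⟨a, -, rfl⟩
  exact ⟨0, a.2⟩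

lemma hasGoingDown_zero_of_isOfFinAddOrder (hM : ∀ i, 𝒜 i ≠ ⊥ → IsOfFinAddOrder i) :
    Algebra.HasGoingDown (SetLike.GradeZero.subring 𝒜) B := by
  have := isIntegral_zero_of_isOfFinAddOrder 𝒜 hM
  refine hasGoingDown_of_forall_mul_mem_map fun q P _ _ hqP a b hab hb => ?_
  obtain ⟨i, hi⟩ : ∃ i, (DirectSum.decompose 𝒜 b i : B) ∉ P := by
    classical
    by_contra! h
    exact hb (DirectSum.sum_support_decompose 𝒜 b ▸ P.sum_mem fun i _ => h i)
  obtain ⟨n, hn, hpow⟩ :=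
    exists_pow_mem_zero_of_isOfFinAddOrder 𝒜 hM (DirectSum.decompose 𝒜 b i).2
  set c : B := (DirectSum.decompose 𝒜 b i : B)
  have hac : (a : B) * c ∈ q.map (algebraMap _ B) := by
    have := isHomogeneous_map_algebraMap_zero 𝒜 q i hab
    exact DirectSum.coe_decompose_mul_of_left_mem_zero 𝒜 a.2 ▸ this
  have hcq : (⟨c ^ n, hpow⟩ : SetLike.GradeZero.subring 𝒜) ∉ q :=
    fun h => hi (Ideal.IsPrime.mem_of_pow_mem ‹_› n (hqP.le h))
  obtain ⟨⟨Q, -, hQq⟩⟩ := Ideal.nonempty_primesOver (S := B) q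
  have hmul : a ^ n * ⟨c ^ n, hpow⟩ ∈ q := by
    rw [hQq.over]
    have : ((a : B) * c) ^ n ∈ Q :=
      Ideal.pow_mem_of_mem _ (Ideal.map_le_iff_le_comap.2 hQq.over.le hac) n hn
    rwa [mul_pow] at this
  exact Ideal.IsPrime.mem_of_pow_mem ‹_› n ((Ideal.IsPrime.mem_or_mem ‹_› hmul).resolve_right hcq)

end TorsionGrading

section Coarsening

variable {G M : Type*} [AddMonoid G] [AddMonoid M] {B : Type*} [Ring B]
  (𝒜 : G → AddSubgroup B) (f : G →+ M)

/-- The coarsening of a `G`-grading along `f : G →+ M`: the component of degree `j` is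
`⊕_{f i = j} B_i`. -/
def coarsening (j : M) : AddSubgroup B :=
  ⨆ i : {i : G // f i = j}, 𝒜 i

variable {𝒜 f} in
lemma mem_coarsening {i : G} {j : M} (hij : f i = j) {x : B} (hx : x ∈ 𝒜 i) :
    x ∈ coarsening 𝒜 f j :=
  AddSubgroup.mem_iSup_of_mem (⟨i, hij⟩ : {i : G // f i = j}) hx

lemma exists_of_coarsening_ne_bot {j : M} (h : coarsening 𝒜 f j ≠ ⊥) :
    ∃ i, f i = j ∧ 𝒜 i ≠ ⊥ := by
  contrapose! h
  exact iSup_eq_bot.2 fun i => h i i.2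

instance coarsening.gradedMonoid [SetLike.GradedMonoid 𝒜] :
    SetLike.GradedMonoid (coarsening 𝒜 f) where
  one_mem := mem_coarsening (map_zero f) (SetLike.GradedOne.one_mem (A := 𝒜))
  mul_mem j k x y hx hy := by
    induction hx using AddSubgroup.iSup_induction' with
    | h1 => simp
    | hadd x₁ x₂ _ _ h₁ h₂ => rw [add_mul]; exact add_mem h₁ h₂
    | hp i x hx =>
      induction hy using AddSubgroup.iSup_induction' with
      | h1 => simp
      | hadd y₁ y₂ _ _ h₁ h₂ => rw [mul_add]; exact add_mem h₁ h₂
      | hp i' y hy =>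
        exact mem_coarsening (by rw [map_add, i.2, i'.2]) (SetLike.mul_mem_graded hx hy)

variable [DecidableEq G] [DecidableEq M]

/-- Regroups the homogeneous components of an element according to their image under `f`. -/
def coarsening.decompose [DirectSum.Decomposition 𝒜] :
    B →+ DirectSum M fun j => coarsening 𝒜 f j :=
  (DirectSum.toAddMonoid fun i =>
    (DirectSum.of (fun j => coarsening 𝒜 f j) (f i)).comp
      (AddSubgroup.inclusion fun _ hx => mem_coarsening rfl hx)).comp
    (DirectSum.decomposeAddEquiv 𝒜).toAddMonoidHom

lemma coarsening.decompose_of_mem [DirectSum.Decomposition 𝒜] {i : G} {j : M} (hij : f i = j)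
    {x : B} (hx : x ∈ 𝒜 i) :
    coarsening.decompose 𝒜 f x =
      DirectSum.of (fun j => coarsening 𝒜 f j) j ⟨x, mem_coarsening hij hx⟩ := by
  subst hij
  simp [decompose, DirectSum.decompose_of_mem 𝒜 hx, AddSubgroup.inclusion]

instance coarsening.decomposition [DirectSum.Decomposition 𝒜] :
    DirectSum.Decomposition (coarsening 𝒜 f) :=
  .ofAddHom _ (coarsening.decompose 𝒜 f)
    (by
      ext x
      induction x using DirectSum.Decomposition.inductionOn 𝒜 with
      | zero => simp
      | homogeneous x =>
        simp [decompose_of_mem 𝒜 f rfl x.2]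
      | add x y hx hy => rw [map_add, map_add, hx, hy])
    (by
      ext j ⟨x, hx⟩ : 2
      suffices decompose 𝒜 f x = DirectSum.of (fun j => coarsening 𝒜 f j) j ⟨x, hx⟩ by simpa
      induction hx using AddSubgroup.iSup_induction' with
      | hp i x hx => exact decompose_of_mem 𝒜 f i.2 hx
      | h1 => exact (map_zero _).trans (map_zero _).symm
      | hadd x y _ _ hx hy => rw [map_add, hx, hy, ← map_add]; rfl)

instance coarsening.gradedRing [GradedRing 𝒜] : GradedRing (coarsening 𝒜 f) where

end Coarsening

section Veronese

variable {G : Type*} [AddCommGroup G] {B : Type*} [CommRing B]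
  (𝒜 : G → AddSubgroup B) (H : AddSubgroup G)

variable {H} in
lemma mem_verSub_of_mem {i : G} (hi : i ∈ H) {x : B} (hx : x ∈ 𝒜 i) : x ∈ verSub 𝒜 H :=
  Subring.subset_closure (Set.mem_biUnion hi hx)

lemma verSub_eq_subring_coarsening [SetLike.GradedMonoid 𝒜] :
    verSub 𝒜 H = SetLike.GradeZero.subring (coarsening 𝒜 (QuotientAddGroup.mk' H)) := by
  refine le_antisymm (Subring.closure_le.2 ?_) fun x hx => ?_
  · refine Set.iUnion₂_subset fun i hi x hx => ?_
    exact mem_coarsening ((QuotientAddGroup.eq_zero_iff i).2 hi) hx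
  · have hle : coarsening 𝒜 (QuotientAddGroup.mk' H) 0 ≤ (verSub 𝒜 H).toAddSubgroup :=
      iSup_le fun i x hx => mem_verSub_of_mem 𝒜 ((QuotientAddGroup.eq_zero_iff i.1).1 i.2) hx
    exact hle hx

variable {𝒜 H} in
lemma Tmem.isOfFinAddOrder (hH : Tmem 𝒜 H) (c : G ⧸ H)
    (hc : coarsening 𝒜 (QuotientAddGroup.mk' H) c ≠ ⊥) : IsOfFinAddOrder c := by
  obtain ⟨i, rfl, hi⟩ := exists_of_coarsening_ne_bot 𝒜 _ hc
  obtain ⟨n, hn, hni⟩ := hH i (AddSubgroup.subset_closure hi)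
  refine isOfFinAddOrder_iff_nsmul_eq_zero.2 ⟨n, hn, ?_⟩
  rw [← map_nsmul]
  exact (QuotientAddGroup.eq_zero_iff _).2 hni

variable [DecidableEq G] [GradedRing 𝒜]

open Classical in
lemma isIntegral_verSub (hH : Tmem 𝒜 H) : Algebra.IsIntegral (verSub 𝒜 H) B := by
  rw [verSub_eq_subring_coarsening]
  exact isIntegral_zero_of_isOfFinAddOrder _ hH.isOfFinAddOrder

open Classical in
lemma hasGoingDown_verSub (hH : Tmem 𝒜 H) : Algebra.HasGoingDown (verSub 𝒜 H) B := by
  rw [verSub_eq_subring_coarsening]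
  exact hasGoingDown_zero_of_isOfFinAddOrder _ hH.isOfFinAddOrder

open Classical in
variable {𝒜 H} in
lemma mem_of_mem_verSub_of_mem {i : G} {x : B} (hx : x ∈ verSub 𝒜 H) (hxi : x ∈ 𝒜 i)
    (hx0 : x ≠ 0) : i ∈ H := by
  rw [verSub_eq_subring_coarsening] at hx
  exact (QuotientAddGroup.eq_zero_iff i).1 <|
    DirectSum.degree_eq_of_mem_mem (coarsening 𝒜 (QuotientAddGroup.mk' H))
      (mem_coarsening rfl hxi) hx hx0

end Veronese

section Degrees

variable {G : Type*} [AddCommGroup G] {B : Type*} [CommRing B] (𝒜 : G → AddSubgroup B)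

/-- `𝕄(B, P)`, which is closed under addition because `P` is prime. -/
def degreesNotIn [SetLike.GradedMonoid 𝒜] (P : Ideal B) [P.IsPrime] : AddSubmonoid G where
  carrier := {i | ¬ (𝒜 i : Set B) ⊆ P}
  zero_mem' h := (Ideal.ne_top_iff_one P).1 Ideal.IsPrime.ne_top' (h SetLike.GradedOne.one_mem)
  add_mem' {i j} hi hj hij := by
    obtain ⟨x, hx, hxP⟩ := Set.not_subset.1 hi
    obtain ⟨y, hy, hyP⟩ := Set.not_subset.1 hj
    exact (Ideal.IsPrime.mem_or_mem ‹_› (hij (SetLike.mul_mem_graded hx hy))).elim hxP hyP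

lemma Gsub_eq_Mbar_bot : Gsub 𝒜 = Mbar 𝒜 ⊥ := by
  simp only [Gsub, Mbar, ne_eq, eq_bot_iff, ← SetLike.coe_subset_coe]
  rfl

lemma GsubOf_eq_MbarSub_bot (S : Subring B) : GsubOf 𝒜 S = MbarSub 𝒜 S ⊥ := by
  unfold GsubOf MbarSub
  congr! with i
  simp [and_comm, and_left_comm]

lemma Mbar_le_Gsub (P : Ideal B) : Mbar 𝒜 P ≤ Gsub 𝒜 := by
  refine AddSubgroup.closure_mono fun i hi h => hi ?_
  simp [h]

variable [DecidableEq G] [GradedRing 𝒜] (H : AddSubgroup G)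

lemma MbarSub_verSub_under (hH : Tmem 𝒜 H) (P : Ideal B) [P.IsPrime] :
    MbarSub 𝒜 (verSub 𝒜 H) (P.under (verSub 𝒜 H)) = H ⊓ Mbar 𝒜 P := by
  have hdeg : {i | ∃ x : verSub 𝒜 H, (x : B) ∈ 𝒜 i ∧ x ∉ P.under (verSub 𝒜 H)} =
      (H : Set G) ∩ degreesNotIn 𝒜 P := by
    ext i
    constructor
    · rintro ⟨x, hxi, hxP⟩
      have hx0 : (x : B) ≠ 0 := fun h => hxP (show (x : B) ∈ P from h ▸ P.zero_mem)
      exact ⟨mem_of_mem_verSub_of_mem x.2 hxi hx0, fun h => hxP (h hxi)⟩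
    · rintro ⟨hiH, hi⟩
      obtain ⟨x, hxi, hxP⟩ := Set.not_subset.1 hi
      exact ⟨⟨x, mem_verSub_of_mem 𝒜 hiH hxi⟩, hxi, hxP⟩
  rw [MbarSub, hdeg]
  exact closure_inter_addSubmonoid_eq_inf_closure H _ fun i hi =>
    hH i (Mbar_le_Gsub 𝒜 P (AddSubgroup.subset_closure hi))

lemma GsubOf_verSub [IsDomain B] (hH : Tmem 𝒜 H) :
    GsubOf 𝒜 (verSub 𝒜 H) = H ⊓ Gsub 𝒜 := by
  have := MbarSub_verSub_under 𝒜 H hH ⊥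
  rwa [Ideal.under_bot, ← GsubOf_eq_MbarSub_bot, ← Gsub_eq_Mbar_bot] at this

lemma GbarSub_verSub [IsDomain B] (hH : Tmem 𝒜 H) :
    GbarSub 𝒜 (verSub 𝒜 H) = H ⊓ Gbar 𝒜 := by
  have := isIntegral_verSub 𝒜 H hH
  have := hasGoingDown_verSub 𝒜 H hH
  let contract (P : {P : Ideal B // heightOne P}) : {p : Ideal (verSub 𝒜 H) // heightOne p} :=
    ⟨P.1.under _, P.2.under⟩
  have hcontract : Function.Surjective contract := fun p =>
    let ⟨P, hP, hPp⟩ := p.2.exists_under_eq (S := B)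
    ⟨⟨P, hP⟩, Subtype.ext hPp⟩
  have hexists : (∃ p : Ideal (verSub 𝒜 H), heightOne p) ↔ ∃ P : Ideal B, heightOne P := by
    simpa only [← nonempty_subtype] using
      ⟨fun ⟨p⟩ => ⟨(hcontract p).choose⟩, Nonempty.map contract⟩
  by_cases hB : ∃ P : Ideal B, heightOne P
  · have : Nonempty {P : Ideal B // heightOne P} := nonempty_subtype.2 hB
    rw [GbarSub, Gbar, if_pos (hexists.2 hB), if_pos hB, ← hcontract.iInf_comp, inf_iInf]
    refine iInf_congr fun P => ?_
    have := P.2.1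
    exact MbarSub_verSub_under 𝒜 H hH P.1
  · rw [GbarSub, Gbar, if_neg (mt hexists.1 hB), if_neg hB, GsubOf_verSub 𝒜 H hH]

end Degrees

theorem Gsub_Gbar_of_veronese_general
    {G : Type*} [AddCommGroup G] [DecidableEq G]
    {B : Type*} [CommRing B] [IsDomain B]
    (𝒜 : G → AddSubgroup B) [GradedRing 𝒜]
    (H : AddSubgroup G) (hH : Tmem 𝒜 H) :
    GsubOf 𝒜 (verSub 𝒜 H) = H ⊓ Gsub 𝒜 ∧ GbarSub 𝒜 (verSub 𝒜 H) = H ⊓ Gbar 𝒜 :=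
  ⟨GsubOf_verSub 𝒜 H hH, GbarSub_verSub 𝒜 H hH⟩

/-- Let B be a domain graded by an abelian group G and H ∈ 𝕋(B).  Then
𝔾(B^{(H)}) = H ∩ 𝔾(B), and, if moreover B is noetherian and normal,
𝔾̄(B^{(H)}) = H ∩ 𝔾̄(B). -/
theorem Gsub_Gbar_of_veronese
    {G : Type*} [AddCommGroup G] [DecidableEq G]
    {B : Type*} [CommRing B] [IsDomain B]
    (𝒜 : G → AddSubgroup B) [GradedRing 𝒜]
    (H : AddSubgroup G) (hH : Tmem 𝒜 H) :
    GsubOf 𝒜 (verSub 𝒜 H) = H ⊓ Gsub 𝒜 ∧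
    (IsNoetherianRing B → IsIntegrallyClosed B →
      GbarSub 𝒜 (verSub 𝒜 H) = H ⊓ Gbar 𝒜) :=
  (Gsub_Gbar_of_veronese_general 𝒜 H hH).imp_right fun h _ _ => h
end
end

section
/- Let k be a field of characteristic 0 and B = ⊕_{i∈ℤ} B_i a ℤ-graded normal affine k-domain. If e(B) ≠ 0 and ē(B) = 0, then there exists a nonzero homogeneous locally nilpotent derivation D of B with ker(D) = B_0; in particular, B is non-rigid. -/
noncomputable section

/-- The nonnegative generator of a subgroup of ℤ (so that the gcd of a set of integers
is `groupGen` of the subgroup it generates, and the lcm of a set of integers is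
`groupGen` of the intersection of the subgroups the elements generate). -/
noncomputable def groupGen (H : AddSubgroup ℤ) : ℕ :=
  (Submodule.IsPrincipal.generator (AddSubgroup.toIntSubmodule H : Ideal ℤ)).natAbs

section ZGraded

variable {B : Type*} [CommRing B]

/-- The set of height-1 homogeneous prime ideals of a ℤ-graded ring. -/
def homogHt1 (𝒜 : ℤ → AddSubgroup B) : Set (Ideal B) :=
  { p | heightOne p ∧ p = Ideal.span { x : B | x ∈ p ∧ ∃ i : ℤ, x ∈ 𝒜 i } }

/-- The saturation index e(B) = gcd{ n : B_n ≠ 0 } of a ℤ-graded ring. -/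
noncomputable def eB (𝒜 : ℤ → AddSubgroup B) : ℕ :=
  groupGen (Gsub 𝒜)

open Classical in
/-- The codimension-1 saturation index ē(B) = lcm{ e(B/p) : p ∈ Z } (Z the set of
height-1 homogeneous primes) if Z ≠ ∅, and ē(B) = e(B) if Z = ∅.  Here e(B/p) is the
gcd of { n : (B/p)_n ≠ 0 } = { n : B_n ⊄ p }, so that e(B/p)ℤ = 𝕄̄(B,p) and the lcm
corresponds to the intersection of the subgroups 𝕄̄(B,p). -/
noncomputable def ebarB (𝒜 : ℤ → AddSubgroup B) : ℕ :=
  if (homogHt1 𝒜).Nonempty then groupGen (⨅ p : homogHt1 𝒜, Mbar 𝒜 p.1) else eB 𝒜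

end ZGraded

/-!
Only finitely many height-one primes contain a given nonzero element of nonzero degree, so
`ē(B) = 0` forces `e(B/p) = 0` for a single homogeneous height-one prime `p`; that is, `p` contains
every component of nonzero degree. The local ring at `p` is a discrete valuation ring with a
homogeneous uniformizer `t`, of degree `d` say, and `s p ⊆ t B` for some `s ∉ p` of degree `0`.
Dividing repeatedly by `t` shows that all degrees are of the form `n d` with `n ≥ 0`: after
inverting `s`, the ring becomes `B₀[t]`. The Euler derivation `E x = i x` for `x ∈ B_i` has kernel
`B₀` and image in `p`, so `D = (s / t) E` is a derivation of `B` with kernel `B₀`; it lowers degrees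
by `d` and is therefore locally nilpotent.
-/

section Indices

lemma exists_eq_bot_of_iInf_eq_bot {R ι : Type*} [CommRing R] [IsDomain R] {I : ι → Ideal R}
    {a : R} (ha : a ≠ 0) (hfin : {j | a ∉ I j}.Finite) (hI : ⨅ j, I j = ⊥) :
    ∃ j, I j = ⊥ := by
  have hle : Ideal.span {a} * ∏ j ∈ hfin.toFinset, I j ≤ ⨅ j, I j := by
    refine le_iInf fun j ↦ ?_
    by_cases haj : a ∈ I j
    · exact Ideal.mul_le_left.trans ((Ideal.span_singleton_le_iff_mem _).mpr haj)
    · exact Ideal.mul_le_right.trans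
        (Ideal.le_of_dvd (Finset.dvd_prod_of_mem I (hfin.mem_toFinset.mpr haj)))
  have hprod : ∏ j ∈ hfin.toFinset, I j = 0 :=
    (mul_eq_zero.mp (le_bot_iff.mp (hle.trans_eq hI))).resolve_left
      (mt Ideal.span_singleton_eq_bot.mp ha)
  obtain ⟨j, -, hj⟩ := Finset.prod_eq_zero_iff.mp hprod
  exact ⟨j, hj⟩

lemma groupGen_eq_zero_iff {H : AddSubgroup ℤ} : groupGen H = 0 ↔ H = ⊥ := by
  rw [groupGen, Int.natAbs_eq_zero, ← Submodule.IsPrincipal.eq_bot_iff_generator_eq_zero]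
  exact map_eq_bot_iff AddSubgroup.toIntSubmodule

lemma eB_ne_zero_iff {B : Type*} [CommRing B] {𝒜 : ℤ → AddSubgroup B} :
    eB 𝒜 ≠ 0 ↔ ∃ i ≠ 0, 𝒜 i ≠ ⊥ := by
  rw [eB, ne_eq, groupGen_eq_zero_iff, Gsub, AddSubgroup.closure_eq_bot_iff, Set.not_subset]
  exact exists_congr fun i ↦ and_comm

lemma Mbar_eq_bot_iff {G : Type*} [AddCommGroup G] {B : Type*} [CommRing B]
    {𝒜 : G → AddSubgroup B} {p : Ideal B} :
    Mbar 𝒜 p = ⊥ ↔ ∀ i ≠ 0, (𝒜 i : Set B) ⊆ p := by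
  rw [Mbar, AddSubgroup.closure_eq_bot_iff]
  exact forall_congr' fun i ↦ not_imp_comm

end Indices

section HeightOne

variable {R : Type*} [CommRing R]

lemma heightOne.height_le_one {p : Ideal R} (hp : heightOne p) : p.height ≤ 1 := by
  have := hp.1
  refine (Ideal.height_le_iff (n := 1)).mpr fun q hq hqp ↦ ?_
  rw [Nat.cast_one, Order.lt_one_iff, Ideal.height_eq_zero_iff]
  exact ⟨⟨hq, bot_le⟩, fun r ⟨hr, _⟩ hrq ↦
    (hrq.lt_or_eq.resolve_left fun hlt ↦ hp.2.2 r q hr hq hlt hqp).ge⟩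

lemma heightOne.ne_bot {p : Ideal R} (hp : heightOne p) : p ≠ ⊥ := by
  obtain ⟨-, ⟨q, -, hqp⟩, -⟩ := hp
  exact (bot_le.trans_lt hqp).ne'

lemma finite_heightOne_mem [IsDomain R] [IsNoetherianRing R] {x : R} (hx : x ≠ 0) :
    {p : Ideal R | heightOne p ∧ x ∈ p}.Finite := by
  refine (Ideal.finite_minimalPrimes_of_isNoetherianRing R (Ideal.span {x})).subset ?_
  rintro p ⟨hp, hxp⟩
  have := hp.1
  exact Ideal.mem_minimalPrimes_of_height_le ((Ideal.span_singleton_le_iff_mem _).mpr hxp)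
    (hp.height_le_one.trans <|
      Ideal.one_le_height_span_singleton_of_mem_nonZeroDivisors (mem_nonZeroDivisors_of_ne_zero hx))

end HeightOne

lemma exists_homogHt1_Mbar_eq_bot {B : Type*} [CommRing B] [IsDomain B] [IsNoetherianRing B]
    {𝒜 : ℤ → AddSubgroup B} (he : eB 𝒜 ≠ 0) (hebar : ebarB 𝒜 = 0) :
    ∃ p ∈ homogHt1 𝒜, Mbar 𝒜 p = ⊥ := by
  obtain ⟨i, hi, hAi⟩ := eB_ne_zero_iff.mp he
  obtain ⟨x, hxi, hx⟩ := (𝒜 i).bot_or_exists_ne_zero.resolve_left hAi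
  have hne : (homogHt1 𝒜).Nonempty := by
    by_contra hempty
    exact he (by rwa [ebarB, if_neg hempty] at hebar)
  rw [ebarB, if_pos hne, groupGen_eq_zero_iff] at hebar
  have hfin : {p : homogHt1 𝒜 | i ∉ Mbar 𝒜 p.1}.Finite := by
    refine ((finite_heightOne_mem hx).preimage Subtype.val_injective.injOn).subset fun p hp ↦ ?_
    refine ⟨p.2.1, by_contra fun hxp ↦ hp (AddSubgroup.subset_closure fun hip ↦ hxp (hip hxi))⟩
  obtain ⟨p, hp⟩ := exists_eq_bot_of_iInf_eq_bot
    (I := fun p : homogHt1 𝒜 ↦ AddSubgroup.toIntSubmodule (Mbar 𝒜 p.1)) hi hfin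
    (by rw [← OrderIso.map_iInf, hebar, OrderIso.map_bot])
  exact ⟨p, p.2, (map_eq_bot_iff AddSubgroup.toIntSubmodule).mp hp⟩

lemma exists_mem_span_singleton_eq_of_isPrincipal {R M : Type*} [CommRing R] [IsLocalRing R]
    [AddCommGroup M] [Module R M] {S : Set M} (hS : S.Nonempty)
    (hprinc : (Submodule.span R S).IsPrincipal) :
    ∃ s ∈ S, Submodule.span R {s} = Submodule.span R S := by
  obtain ⟨π, hπ⟩ := hprinc.principal
  by_cases hunit : ∃ c : R, IsUnit c ∧ c • π ∈ S
  · obtain ⟨c, hc, hcS⟩ := hunit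
    exact ⟨c • π, hcS, by rw [hπ, Submodule.span_singleton_smul_eq hc]⟩
  · have hle : Submodule.span R S ≤ IsLocalRing.maximalIdeal R • Submodule.span R S := by
      refine Submodule.span_le.mpr fun s hs ↦ ?_
      obtain ⟨c, rfl⟩ := Submodule.mem_span_singleton.mp (hπ ▸ Submodule.subset_span hs)
      have hc : c ∈ IsLocalRing.maximalIdeal R := fun hc ↦ hunit ⟨c, hc, hs⟩
      exact Submodule.smul_mem_smul hc (hπ ▸ Submodule.mem_span_singleton_self π)
    have hbot : Submodule.span R S = ⊥ :=
      Submodule.eq_bot_of_le_smul_of_le_jacobson_bot _ _ ⟨{π}, by simpa using hπ.symm⟩ hle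
        (IsLocalRing.maximalIdeal_le_jacobson ⊥)
    obtain ⟨s, hs⟩ := hS
    refine ⟨s, hs, ?_⟩
    rw [hbot, Submodule.span_singleton_eq_bot]
    exact Submodule.span_eq_bot.mp hbot s hs

lemma isPrincipal_maximalIdeal_of_height_le_one {R : Type*} [CommRing R] [IsDomain R]
    [IsNoetherianRing R] [IsIntegrallyClosed R] {p : Ideal R} [p.IsPrime] (hp : p.height ≤ 1) :
    (IsLocalRing.maximalIdeal (Localization.AtPrime p)).IsPrincipal := by
  have hM := p.primeCompl_le_nonZeroDivisors
  have : IsDomain (Localization.AtPrime p) := IsLocalization.isDomain_localization hM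
  have : IsNoetherianRing (Localization.AtPrime p) :=
    IsLocalization.isNoetherianRing p.primeCompl _ inferInstance
  have : IsIntegrallyClosed (Localization.AtPrime p) :=
    isIntegrallyClosed_of_isLocalization _ p.primeCompl hM
  have hdim : Ring.KrullDimLE 1 (Localization.AtPrime p) := by
    rw [Ring.krullDimLE_iff, IsLocalization.AtPrime.ringKrullDim_eq_height p]
    exact_mod_cast hp
  have : Ring.DimensionLEOne (Localization.AtPrime p) :=
    ⟨fun hne hq ↦ Ideal.IsPrime.isMaximal_of_ne_bot hq hne⟩
  have : IsDedekindDomain (Localization.AtPrime p) := { }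
  exact maximalIdeal_isPrincipal_of_isDedekindDomain _

lemma exists_mul_mem_of_map_le_map {R : Type*} [CommRing R] (M : Submonoid R) (L : Type*)
    [CommRing L] [Algebra R L] [IsLocalization M L] {I J : Ideal R} (hI : I.FG)
    (hIJ : I.map (algebraMap R L) ≤ J.map (algebraMap R L)) :
    ∃ m ∈ M, ∀ x ∈ I, m * x ∈ J := by
  obtain ⟨F, rfl⟩ := hI
  have hgen : ∀ x ∈ F, ∃ m ∈ M, m * x ∈ J := fun x hx ↦
    (IsLocalization.algebraMap_mem_map_algebraMap_iff M L J x).mp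
      (hIJ (Ideal.mem_map_of_mem _ (Ideal.subset_span hx)))
  choose! m hmM hmJ using hgen
  refine ⟨∏ x ∈ F, m x, prod_mem hmM, fun x hx ↦ ?_⟩
  refine (Submodule.span_le (p := Submodule.comap (LinearMap.mulLeft R (∏ x ∈ F, m x)) J)).mpr ?_ hx
  intro y hy
  obtain ⟨c, hc⟩ := Finset.dvd_prod_of_mem m hy
  rw [SetLike.mem_coe, Submodule.mem_comap, LinearMap.mulLeft_apply, hc, mul_right_comm]
  exact J.mul_mem_right c (hmJ y hy)

lemma eq_zero_of_forall_exists_mul_mem_pow {R : Type*} [CommRing R] [IsDomain R]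
    [IsNoetherianRing R] {p : Ideal R} [p.IsPrime] {x : R}
    (hx : ∀ n, ∃ s ∉ p, s * x ∈ p ^ n) : x = 0 := by
  have hM := p.primeCompl_le_nonZeroDivisors
  have : IsNoetherianRing (Localization.AtPrime p) :=
    IsLocalization.isNoetherianRing p.primeCompl _ inferInstance
  refine IsLocalization.injective (Localization.AtPrime p) hM ?_
  rw [map_zero, ← Ideal.mem_bot,
    ← Ideal.iInf_pow_eq_bot_of_isLocalRing _ (IsLocalRing.maximalIdeal.isMaximal _).ne_top,
    Ideal.mem_iInf]
  intro n
  rw [← Localization.AtPrime.map_eq_maximalIdeal, ← Ideal.map_pow,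
    IsLocalization.algebraMap_mem_map_algebraMap_iff p.primeCompl]
  exact hx n

lemma exists_mem_forall_dvd_mul_of_height_le_one {R : Type*} [CommRing R] [IsDomain R]
    [IsNoetherianRing R] [IsIntegrallyClosed R] {p : Ideal R} [p.IsPrime] (hp : p.height ≤ 1)
    {S : Set R} (hS : S.Nonempty) (hpS : p = Ideal.span S) :
    ∃ t ∈ S, ∃ s ∉ p, ∀ x ∈ p, t ∣ s * x := by
  have hspan : Ideal.span (algebraMap R (Localization.AtPrime p) '' S) =
      IsLocalRing.maximalIdeal (Localization.AtPrime p) := by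
    rw [← Localization.AtPrime.map_eq_maximalIdeal, ← Ideal.map_span, ← hpS]
  have hprinc := isPrincipal_maximalIdeal_of_height_le_one hp
  rw [← hspan] at hprinc
  obtain ⟨_, ⟨t, htS, rfl⟩, ht⟩ :=
    exists_mem_span_singleton_eq_of_isPrincipal (hS.image _) hprinc
  have hle : p.map (algebraMap R (Localization.AtPrime p)) ≤
      (Ideal.span {t}).map (algebraMap R (Localization.AtPrime p)) := by
    rw [Localization.AtPrime.map_eq_maximalIdeal, Ideal.map_span, Set.image_singleton, ← hspan]
    exact ht.ge
  obtain ⟨s, hs, hsp⟩ := exists_mul_mem_of_map_le_map p.primeCompl _ (IsNoetherian.noetherian p) hle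
  exact ⟨t, htS, s, hs, fun x hx ↦ Ideal.mem_span_singleton.mp (hsp x hx)⟩

lemma exists_smul_eq_of_forall_dvd {R A : Type*} [CommRing R] [CommRing A] [IsDomain A]
    [Algebra R A] {D : Derivation R A A} {t : A} (ht : t ≠ 0) (hD : ∀ x, t ∣ D x) :
    ∃ D' : Derivation R A A, t • D' = D := by
  choose f hf using hD
  have hcancel {x y : A} (h : t * x = t * y) : x = y := mul_left_cancel₀ ht h
  let F : A →ₗ[R] A :=
    { toFun := f
      map_add' := fun x y ↦ hcancel <| by rw [mul_add, ← hf, ← hf, ← hf, map_add]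
      map_smul' := fun r x ↦ hcancel <| by
        rw [RingHom.id_apply, mul_smul_comm, ← hf, ← hf, D.map_smul] }
  refine ⟨Derivation.mk' F fun x y ↦ hcancel ?_, Derivation.ext fun x ↦ (hf x).symm⟩
  calc t * f (x * y) = x • D y + y • D x := by rw [← hf, D.leibniz]
    _ = t * (x • f y + y • f x) := by
      rw [hf x, hf y]; simp only [smul_eq_mul]; ring

section Grading

variable {G B : Type*} [AddCommGroup G] [DecidableEq G] [CommRing B] {𝒜 : G → AddSubgroup B}
  [GradedRing 𝒜] {p : Ideal B} {d : G} {t : B}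

open DirectSum

lemma mem_of_decompose_zero_mem (hp : ∀ i ≠ 0, (𝒜 i : Set B) ⊆ p) {x : B}
    (hx : (decompose 𝒜 x 0 : B) ∈ p) : x ∈ p := by
  classical
  rw [← sum_support_decompose 𝒜 x]
  refine sum_mem fun i _ ↦ ?_
  obtain rfl | hi := eq_or_ne i 0
  · exact hx
  · exact hp i hi (decompose 𝒜 x i).2

lemma dvd_decompose_mul_of_forall_dvd_mul (hp : p.IsHomogeneous 𝒜) (ht : t ∈ 𝒜 d) {s : B}
    (hs : ∀ x ∈ p, t ∣ s * x) (j : G) {x : B} (hx : x ∈ p) :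
    t ∣ (decompose 𝒜 s j : B) * x := by
  classical
  rw [← sum_support_decompose 𝒜 x, Finset.mul_sum]
  refine Finset.dvd_sum fun i _ ↦ ?_
  obtain ⟨y, hy⟩ := hs _ (hp i hx)
  refine ⟨decompose 𝒜 y (j + i - d), ?_⟩
  rw [← coe_decompose_mul_add_of_right_mem 𝒜 (decompose 𝒜 x i).2, hy,
    ← coe_decompose_mul_add_of_left_mem 𝒜 ht, add_sub_cancel]

lemma exists_homogeneous_forall_dvd_mul [IsDomain B] [IsNoetherianRing B] [IsIntegrallyClosed B]
    [p.IsPrime] (hp1 : p.height ≤ 1) (hp0 : p ≠ ⊥) (hhom : p.IsHomogeneous 𝒜)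
    (hp : ∀ i ≠ 0, (𝒜 i : Set B) ⊆ p) :
    ∃ d, ∃ t ∈ 𝒜 d, t ∈ p ∧ t ≠ 0 ∧ ∃ s ∈ 𝒜 0, s ∉ p ∧ ∀ x ∈ p, t ∣ s * x := by
  obtain ⟨S, hS⟩ := (Ideal.IsHomogeneous.iff_exists 𝒜 p).mp hhom
  have hne : ((↑) '' S : Set B).Nonempty := by
    rw [Set.nonempty_iff_ne_empty]
    intro hempty
    exact hp0 (by rw [hS, hempty, Ideal.span_empty])
  obtain ⟨_, ⟨⟨t, d, ht⟩, htS, rfl⟩, s, hsp, hs⟩ :=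
    exists_mem_forall_dvd_mul_of_height_le_one hp1 hne hS
  have ht0 : t ≠ 0 := by
    rintro rfl
    obtain ⟨x, hxp, hx0⟩ := Submodule.exists_mem_ne_zero_of_ne_bot hp0
    have hs0 : s ≠ 0 := fun h ↦ hsp (h ▸ p.zero_mem)
    exact mul_ne_zero hs0 hx0 (zero_dvd_iff.mp (hs x hxp))
  exact ⟨d, t, ht, hS ▸ Ideal.subset_span ⟨_, htS, rfl⟩, ht0, decompose 𝒜 s 0,
    (decompose 𝒜 s 0).2, mt (mem_of_decompose_zero_mem hp) hsp,
    fun x ↦ dvd_decompose_mul_of_forall_dvd_mul hhom ht hs 0⟩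

lemma mem_of_mul_mem_add [IsDomain B] (ht : t ∈ 𝒜 d) (ht0 : t ≠ 0) {j : G} {y : B}
    (hty : t * y ∈ 𝒜 (d + j)) : y ∈ 𝒜 j := by
  have hcomp : t * decompose 𝒜 y j = t * y := by
    rw [← coe_decompose_mul_add_of_left_mem 𝒜 ht, decompose_of_mem_same 𝒜 hty]
  exact mul_left_cancel₀ ht0 hcomp ▸ (decompose 𝒜 y j).2

-- If `i` is not a multiple `n • d`, then dividing `x` by `t` (up to powers of `s`) can be repeated
-- forever, so `x` lies in every symbolic power of `p`.
lemma exists_degree_eq_nsmul [IsDomain B] [IsNoetherianRing B] [p.IsPrime]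
    (hp : ∀ i ≠ 0, (𝒜 i : Set B) ⊆ p) (htp : t ∈ p) (ht : t ∈ 𝒜 d) (ht0 : t ≠ 0) {s : B}
    (hs : s ∈ 𝒜 0) (hsp : s ∉ p) (hdvd : ∀ x ∈ p, t ∣ s * x) {i : G} {x : B} (hx : x ∈ 𝒜 i)
    (hx0 : x ≠ 0) : ∃ n : ℕ, i = n • d := by
  by_contra! hi
  have hdiv (n : ℕ) : ∃ y ∈ 𝒜 (i - n • d), s ^ n * x = t ^ n * y := by
    induction n with
    | zero => exact ⟨x, by simpa using hx, by simp⟩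
    | succ n ih =>
      obtain ⟨y, hy, hxy⟩ := ih
      obtain ⟨z, hz⟩ := hdvd y (hp _ (sub_ne_zero.mpr (hi n)) hy)
      refine ⟨z, mem_of_mul_mem_add ht ht0 ?_, ?_⟩
      · have hsy := SetLike.mul_mem_graded hs hy
        rwa [hz, show 0 + (i - n • d) = d + (i - (n + 1) • d) by rw [succ_nsmul]; abel] at hsy
      · calc s ^ (n + 1) * x = s * (s ^ n * x) := by ring
          _ = t ^ n * (s * y) := by rw [hxy]; ring
          _ = t ^ (n + 1) * z := by rw [hz]; ring
  refine hx0 (eq_zero_of_forall_exists_mul_mem_pow (p := p) fun n ↦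
    ⟨s ^ n, mt (Ideal.IsPrime.mem_of_pow_mem ‹_› n) hsp, ?_⟩)
  obtain ⟨y, -, hxy⟩ := hdiv n
  exact hxy ▸ Ideal.mul_mem_right y _ (Ideal.pow_mem_pow htp n)

lemma isLND_of_map_mem_sub (D : Derivation ℤ B B) (hD : ∀ i, ∀ x ∈ 𝒜 i, D x ∈ 𝒜 (i - d))
    (hD0 : ∀ x ∈ 𝒜 0, D x = 0) (hdeg : ∀ i, 𝒜 i ≠ ⊥ → ∃ n : ℕ, i = n • d) : IsLND D := by
  have hiter (n : ℕ) {x : B} (hx : x ∈ 𝒜 (n • d)) : (⇑D)^[n + 1] x = 0 := by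
    induction n generalizing x with
    | zero => exact hD0 x (by rwa [zero_nsmul] at hx)
    | succ n ih =>
      rw [Function.iterate_succ_apply]
      exact ih (by simpa [succ_nsmul] using hD _ x hx)
  have hmono {m n : ℕ} (hmn : m ≤ n) {x : B} (hx : (⇑D)^[m] x = 0) : (⇑D)^[n] x = 0 := by
    obtain ⟨k, rfl⟩ := Nat.exists_eq_add_of_le' hmn
    rw [Function.iterate_add_apply, hx, iterate_map_zero]
  refine Decomposition.inductionOn 𝒜 ⟨1, one_pos, map_zero D⟩ ?_ ?_
  · rintro i ⟨x, hx⟩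
    by_cases hi : 𝒜 i = ⊥
    · rw [hi, AddSubgroup.mem_bot] at hx
      exact ⟨1, one_pos, by simp [hx]⟩
    · obtain ⟨n, rfl⟩ := hdeg i hi
      exact ⟨n + 1, n.succ_pos, hiter n hx⟩
  · rintro x y ⟨m, hm, hx⟩ ⟨n, -, hy⟩
    refine ⟨max m n, lt_max_of_lt_left hm, ?_⟩
    rw [iterate_map_add, hmono (le_max_left m n) hx, hmono (le_max_right m n) hy, add_zero]

end Grading

lemma isHomogeneous_of_mem_homogHt1 {B : Type*} [CommRing B] {𝒜 : ℤ → AddSubgroup B}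
    [GradedRing 𝒜] {p : Ideal B} (hp : p ∈ homogHt1 𝒜) : p.IsHomogeneous 𝒜 := by
  rw [hp.2]
  exact Ideal.homogeneous_span 𝒜 _ fun x hx ↦ hx.2

lemma coe_zero_ne_univ_of_eB_ne_zero {B : Type*} [CommRing B] {𝒜 : ℤ → AddSubgroup B}
    [GradedRing 𝒜] (he : eB 𝒜 ≠ 0) : (𝒜 0 : Set B) ≠ Set.univ := by
  intro huniv
  obtain ⟨i, hi, hAi⟩ := eB_ne_zero_iff.mp he
  obtain ⟨x, hxi, hx0⟩ := (𝒜 i).bot_or_exists_ne_zero.resolve_left hAi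
  have hx : x ∈ (𝒜 0 : Set B) := huniv ▸ Set.mem_univ x
  exact hi (DirectSum.degree_eq_of_mem_mem 𝒜 hxi hx hx0)

section Euler

variable {B : Type*} [CommRing B] (𝒜 : ℤ → AddSubgroup B) [GradedRing 𝒜]

open DirectSum

/-- The additive map `x ↦ i • x` on each component `𝒜 i`, underlying `eulerDerivation`. -/
def eulerHom : B →+ B :=
  (DirectSum.toAddMonoid fun i ↦ i • (𝒜 i).subtype).comp (decomposeAddEquiv 𝒜).toAddMonoidHom

variable {𝒜}

lemma eulerHom_of_mem {i : ℤ} {x : B} (hx : x ∈ 𝒜 i) : eulerHom 𝒜 x = i • x := by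
  simp [eulerHom, decompose_of_mem 𝒜 hx]

lemma eulerHom_mul (x y : B) :
    eulerHom 𝒜 (x * y) = x * eulerHom 𝒜 y + y * eulerHom 𝒜 x := by
  induction x using Decomposition.inductionOn 𝒜 with
  | zero => simp
  | add x x' hx hx' => rw [add_mul, map_add, map_add, hx, hx']; ring
  | homogeneous x =>
    induction y using Decomposition.inductionOn 𝒜 with
    | zero => simp
    | add y y' hy hy' => rw [mul_add, map_add, map_add, hy, hy']; ring
    | homogeneous y =>
      rw [eulerHom_of_mem x.2, eulerHom_of_mem y.2,
        eulerHom_of_mem (SetLike.mul_mem_graded x.2 y.2), add_smul, mul_smul_comm,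
        mul_smul_comm, mul_comm (y : B), add_comm]

variable (𝒜) in
/-- The Euler derivation of a `ℤ`-graded ring, which multiplies elements of degree `i` by `i`. -/
def eulerDerivation : Derivation ℤ B B :=
  Derivation.mk' (eulerHom 𝒜).toIntLinearMap eulerHom_mul

lemma eulerDerivation_of_mem {i : ℤ} {x : B} (hx : x ∈ 𝒜 i) : eulerDerivation 𝒜 x = i • x :=
  eulerHom_of_mem hx

lemma decompose_eulerDerivation (x : B) (i : ℤ) :
    (decompose 𝒜 (eulerDerivation 𝒜 x) i : B) = i • (decompose 𝒜 x i : B) := by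
  induction x using Decomposition.inductionOn 𝒜 with
  | zero => simp
  | add x y hx hy => simp [hx, hy]
  | @homogeneous j x =>
    rw [eulerDerivation_of_mem x.2]
    obtain rfl | hij := eq_or_ne j i
    · rw [decompose_of_mem_same 𝒜 x.2, decompose_of_mem_same 𝒜 (zsmul_mem x.2 j)]
    · rw [decompose_of_mem_ne 𝒜 x.2 hij, decompose_of_mem_ne 𝒜 (zsmul_mem x.2 j) hij, smul_zero]

lemma eulerDerivation_eq_zero_iff [IsAddTorsionFree B] {x : B} :
    eulerDerivation 𝒜 x = 0 ↔ x ∈ 𝒜 0 := by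
  refine ⟨fun hx ↦ ?_, fun hx ↦ by rw [eulerDerivation_of_mem hx, zero_smul]⟩
  classical
  have hcomp : ∀ i ≠ 0, (decompose 𝒜 x i : B) = 0 := fun i hi ↦ by
    have hsmul : i • (decompose 𝒜 x i : B) = 0 := by
      rw [← decompose_eulerDerivation, hx, decompose_zero]; rfl
    exact (smul_eq_zero.mp hsmul).resolve_left hi
  rw [← sum_support_decompose 𝒜 x]
  refine sum_mem fun i _ ↦ ?_
  obtain rfl | hi := eq_or_ne i 0
  · exact (decompose 𝒜 x 0).2
  · exact hcomp i hi ▸ zero_mem _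

lemma eulerDerivation_mem {p : Ideal B} (hp : ∀ i ≠ 0, (𝒜 i : Set B) ⊆ p) (x : B) :
    eulerDerivation 𝒜 x ∈ p :=
  mem_of_decompose_zero_mem hp (by rw [decompose_eulerDerivation, zero_smul]; exact p.zero_mem)

lemma exists_isLND_of_dvd_mul_eulerDerivation [IsDomain B] [CharZero B] {d : ℤ} {s t : B}
    (ht : t ∈ 𝒜 d) (ht0 : t ≠ 0) (hs : s ∈ 𝒜 0) (hs0 : s ≠ 0)
    (hdvd : ∀ x, t ∣ s * eulerDerivation 𝒜 x) (hdeg : ∀ i, 𝒜 i ≠ ⊥ → ∃ n : ℕ, i = n • d) :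
    ∃ D : Derivation ℤ B B, IsLND D ∧ IsHomogDer 𝒜 D ∧ {x | D x = 0} = (𝒜 0 : Set B) := by
  obtain ⟨D, hD⟩ := exists_smul_eq_of_forall_dvd (D := s • eulerDerivation 𝒜) ht0 hdvd
  have htD (x : B) : t * D x = s * eulerDerivation 𝒜 x := DFunLike.congr_fun hD x
  have hker (x : B) : D x = 0 ↔ x ∈ 𝒜 0 := by
    rw [← eulerDerivation_eq_zero_iff, ← mul_eq_zero_iff_left ht0, htD, mul_eq_zero_iff_left hs0]
  have hmap (i : ℤ) (x : B) (hx : x ∈ 𝒜 i) : D x ∈ 𝒜 (i - d) := by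
    refine mem_of_mul_mem_add ht ht0 ?_
    rw [htD, eulerDerivation_of_mem hx, add_sub_cancel]
    simpa using SetLike.mul_mem_graded hs (zsmul_mem hx i)
  exact ⟨D, isLND_of_map_mem_sub D hmap (fun x ↦ (hker x).mpr) hdeg, ⟨-d, hmap⟩, Set.ext hker⟩

end Euler

theorem nonrigid_of_ebar_zero_general {B : Type*} [CommRing B] [IsDomain B] [IsIntegrallyClosed B]
    [IsNoetherianRing B] [CharZero B] (𝒜 : ℤ → AddSubgroup B) [GradedRing 𝒜]
    (he : eB 𝒜 ≠ 0) (hebar : ebarB 𝒜 = 0) :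
    ∃ D : Derivation ℤ B B, IsLND D ∧ IsHomogDer 𝒜 D ∧ D ≠ 0 ∧
      { x : B | D x = 0 } = (𝒜 0 : Set B) := by
  obtain ⟨p, hpZ, hpbar⟩ := exists_homogHt1_Mbar_eq_bot he hebar
  have hp : ∀ i ≠ 0, (𝒜 i : Set B) ⊆ p := Mbar_eq_bot_iff.mp hpbar
  have hprime : p.IsPrime := hpZ.1.1
  obtain ⟨d, t, ht, htp, ht0, s, hs, hsp, hdvd⟩ :=
    exists_homogeneous_forall_dvd_mul hpZ.1.height_le_one hpZ.1.ne_bot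
      (isHomogeneous_of_mem_homogHt1 hpZ) hp
  have hdeg (i : ℤ) (hi : 𝒜 i ≠ ⊥) : ∃ n : ℕ, i = n • d := by
    obtain ⟨x, hx, hx0⟩ := (𝒜 i).bot_or_exists_ne_zero.resolve_left hi
    exact exists_degree_eq_nsmul hp htp ht ht0 hs hsp hdvd hx hx0
  have hs0 : s ≠ 0 := fun h ↦ hsp (h ▸ p.zero_mem)
  obtain ⟨D, hlnd, hhom, hker⟩ := exists_isLND_of_dvd_mul_eulerDerivation ht ht0 hs hs0
    (fun x ↦ hdvd _ (eulerDerivation_mem hp x)) hdeg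
  refine ⟨D, hlnd, hhom, ?_, hker⟩
  rintro rfl
  exact coe_zero_ne_univ_of_eB_ne_zero he (hker ▸ Set.eq_univ_of_forall fun _ ↦ rfl)

/-- Let k be a field of characteristic 0 and B a ℤ-graded normal affine k-domain.
If e(B) ≠ 0 and ē(B) = 0 then there is a nonzero homogeneous locally nilpotent
derivation D of B with ker D = B₀; in particular B is non-rigid. -/
theorem nonrigid_of_ebar_zero
    {k : Type*} [Field k] [CharZero k]
    {B : Type*} [CommRing B] [IsDomain B] [IsIntegrallyClosed B]
    [Algebra k B] [Algebra.FiniteType k B]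
    (𝒜 : ℤ → AddSubgroup B) [GradedRing 𝒜]
    (he : eB 𝒜 ≠ 0) (hebar : ebarB 𝒜 = 0) :
    ∃ D : Derivation ℤ B B, IsLND D ∧ IsHomogDer 𝒜 D ∧ D ≠ 0 ∧
      { x : B | D x = 0 } = (𝒜 0 : Set B) := by
  have : CharZero B := charZero_of_injective_algebraMap (algebraMap k B).injective
  have : IsNoetherianRing B := Algebra.FiniteType.isNoetherianRing k B
  exact nonrigid_of_ebar_zero_general 𝒜 he hebar
end
end
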